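/- Let b(z) be an n×n real polynomial matrix with det b(z) ≠ 0 for all complex z with |z| = 1, and suppose b(z) = p(z) s(z) f(z) and b(z) = p̃(z) s̃(z) f̃(z) are two Wiener–Hopf factorisations of b, with partial indices κ₁ ≥ ⋯ ≥ κₙ and κ̃₁ ≥ ⋯ ≥ κ̃ₙ respectively. Then κᵢ = κ̃ᵢ for all i = 1,…,n; in particular s(z) = s̃(z), i.e. the partial indices of a Wiener–Hopf factorisation are uniquely determined by b. -/

import Mathlib

open Polynomial Matrix

/-- Evaluation of a real polynomial matrix at a complex point (entrywise). -/
noncomputable def evalMat {n : ℕ} (M : Matrix (Fin n) (Fin n) (Polynomial ℝ)) (z : ℂ) :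
    Matrix (Fin n) (Fin n) ℂ :=
  M.map (fun r => Polynomial.aeval z r)

/-- A polynomial matrix viewed as a matrix over the field of real rational functions. -/
noncomputable def polyToRat {n : ℕ} (M : Matrix (Fin n) (Fin n) (Polynomial ℝ)) :
    Matrix (Fin n) (Fin n) (RatFunc ℝ) :=
  M.map (algebraMap (Polynomial ℝ) (RatFunc ℝ))

/-- The rational matrix F(1/z) obtained from a polynomial matrix F by substituting 1/z. -/
noncomputable def invSub {n : ℕ} (F : Matrix (Fin n) (Fin n) (Polynomial ℝ)) :
    Matrix (Fin n) (Fin n) (RatFunc ℝ) :=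
  F.map (fun r => Polynomial.aeval ((RatFunc.X : RatFunc ℝ)⁻¹) r)

/-- The diagonal matrix diag(z^{κ₁},…,z^{κₙ}) over ℝ(z). -/
noncomputable def sMat (n : ℕ) (κ : Fin n → ℤ) : Matrix (Fin n) (Fin n) (RatFunc ℝ) :=
  Matrix.diagonal (fun i => (RatFunc.X : RatFunc ℝ) ^ (κ i))

/-- `IsWHF b p F κ` : b(z) = p(z) · diag(z^{κᵢ}) · F(1/z) is a Wiener–Hopf factorisation. -/
structure IsWHF {n : ℕ} (b p F : Matrix (Fin n) (Fin n) (Polynomial ℝ))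
    (κ : Fin n → ℤ) : Prop where
  p_noZero : ∀ z : ℂ, ‖z‖ ≤ 1 → (evalMat p z).det ≠ 0
  F_noZero : ∀ w : ℂ, ‖w‖ ≤ 1 → (evalMat F w).det ≠ 0
  anti : ∀ i j : Fin n, i ≤ j → κ j ≤ κ i
  eq : polyToRat b = polyToRat p * sMat n κ * invSub F

/-- Partial indices of type (κ,k): the first k indices equal κ+1, the rest κ. -/
def idx (n : ℕ) (κ k : ℕ) : Fin n → ℤ := fun i => if (i : ℕ) < k then (κ : ℤ) + 1 else (κ : ℤ)

/- Write `p s F(1/z) = p' s' F'(1/z)` and multiply by the adjugates of `p'` and `F`. With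
`A = adj(p') p` and `B = F' adj(F)`, the `(r, c)` entries satisfy
`A_rc z^κ_c det F(1/z) = det p' z^κ'_r B_rc(1/z)`. If `κ_c > κ'_r`, clearing denominators gives
`A_rc u = det p' v` with polynomials `u`, `v` such that `deg v < deg u`. The zeros of `u` are `0`
and the zeros of `det F(1/z)`, all in `|z| < 1`, while those of `det p'` lie in `|z| > 1`. So `u`
divides `v`, which forces `v = 0` and `A_rc = 0`. If `κ_i > κ'_i` for some `i`, monotonicity of the
indices gives this for all `r ≥ i ≥ c`, and a zero block of this size makes `det A` vanish, although
`det A = (det p')^(n-1) det p ≠ 0`. -/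

section Determinant

variable {ι R S L : Type*} [Fintype ι] [DecidableEq ι] [CommRing R] [CommRing S] [CommRing L]

lemma det_eq_zero_of_card_lt_card_add_card (M : Matrix ι ι R) (s t : Finset ι)
    (hst : Fintype.card ι < s.card + t.card) (hM : ∀ r ∈ s, ∀ c ∈ t, M r c = 0) :
    M.det = 0 := by
  rw [det_apply]
  refine Finset.sum_eq_zero fun σ _ => ?_
  obtain ⟨r, hr⟩ : (s ∩ t.map σ.toEmbedding).Nonempty :=
    Finset.inter_nonempty_of_card_lt_card_add_card (Finset.subset_univ _) (Finset.subset_univ _)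
      (by rwa [Finset.card_map])
  obtain ⟨hrs, hrt⟩ := Finset.mem_inter.mp hr
  obtain ⟨c, hc, rfl⟩ := Finset.mem_map.mp hrt
  have hprod : ∏ j, M (σ j) j = 0 :=
    Finset.prod_eq_zero (f := fun j => M (σ j) j) (Finset.mem_univ c) (hM _ hrs c hc)
  rw [hprod, smul_zero]

lemma adjugate_mul_apply_of_mul_diagonal_mul_eq (φ : R →+* L) (ψ : S →+* L)
    {p p' : Matrix ι ι R} {F F' : Matrix ι ι S} {δ δ' : ι → L}
    (h : p.map φ * diagonal δ * F.map ψ = p'.map φ * diagonal δ' * F'.map ψ) (r c : ι) :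
    φ ((adjugate p' * p) r c) * δ c * ψ F.det =
      φ p'.det * δ' r * ψ ((F' * adjugate F) r c) := by
  have hF : F.map ψ * (adjugate F).map ψ = ψ F.det • (1 : Matrix ι ι L) := by
    rw [← Matrix.map_mul, mul_adjugate, Matrix.map_smul' _ _ _ (map_mul ψ),
      Matrix.map_one _ (map_zero ψ) (map_one ψ)]
  have hp' : (adjugate p').map φ * p'.map φ = φ p'.det • (1 : Matrix ι ι L) := by
    rw [← Matrix.map_mul, adjugate_mul, Matrix.map_smul' _ _ _ (map_mul φ),
      Matrix.map_one _ (map_zero φ) (map_one φ)]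
  have hentry : (adjugate p' * p).map φ * diagonal δ * (ψ F.det • (1 : Matrix ι ι L)) =
      (φ p'.det • (1 : Matrix ι ι L)) * diagonal δ' * (F' * adjugate F).map ψ := by
    calc (adjugate p' * p).map φ * diagonal δ * (ψ F.det • (1 : Matrix ι ι L))
        = (adjugate p').map φ * (p.map φ * diagonal δ * F.map ψ) * (adjugate F).map ψ := by
          simp only [← hF, Matrix.map_mul, Matrix.mul_assoc]
      _ = (adjugate p').map φ * (p'.map φ * diagonal δ' * F'.map ψ) * (adjugate F).map ψ := by
          rw [h]
      _ = (φ p'.det • (1 : Matrix ι ι L)) * diagonal δ' * (F' * adjugate F).map ψ := by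
          simp only [← hp', Matrix.map_mul, Matrix.mul_assoc]
  simpa only [smul_one_eq_diagonal, diagonal_mul_diagonal, mul_diagonal, diagonal_mul, map_apply]
    using congrFun₂ hentry r c

end Determinant

section Reverse

variable {K : Type*} [Field K]

lemma aeval_inv_X_mul_X_pow_natDegree (f : K[X]) :
    aeval (RatFunc.X : RatFunc K)⁻¹ f * RatFunc.X ^ f.natDegree =
      algebraMap K[X] (RatFunc K) f.reverse := by
  have hX : (RatFunc.X : RatFunc K) ≠ 0 := RatFunc.X_ne_zero
  let _ : Invertible (RatFunc.X : RatFunc K)⁻¹ :=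
    ⟨RatFunc.X, mul_inv_cancel₀ hX, inv_mul_cancel₀ hX⟩
  have hrev : aeval (RatFunc.X : RatFunc K) f.reverse * (RatFunc.X : RatFunc K)⁻¹ ^ f.natDegree =
      aeval (RatFunc.X : RatFunc K)⁻¹ f :=
    eval₂_reverse_mul_pow (algebraMap K (RatFunc K)) (RatFunc.X : RatFunc K)⁻¹ f
  rw [← hrev, mul_assoc, ← mul_pow, inv_mul_cancel₀ hX, one_pow, mul_one, ← RatFunc.algebraMap_X,
    aeval_algebraMap_apply, aeval_X_left_apply]

lemma natDegree_reverse_of_coeff_zero_ne_zero {R : Type*} [Semiring R] {f : R[X]}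
    (hf : f.coeff 0 ≠ 0) : f.reverse.natDegree = f.natDegree := by
  rw [reverse_natDegree, natTrailingDegree_eq_zero_of_constantCoeff_ne_zero hf, Nat.sub_zero]

lemma isCoprime_X_mul_reverse {L : Type*} [NormedField L] [IsAlgClosed L] [Algebra K L]
    {f g : K[X]} (hf : ∀ z : L, ‖z‖ ≤ 1 → aeval z f ≠ 0) (hg : ∀ w : L, ‖w‖ ≤ 1 → aeval w g ≠ 0) :
    IsCoprime f (X * g.reverse) := by
  rw [isCoprime_iff_aeval_ne_zero_of_isAlgClosed K L]
  intro z
  rcases le_or_gt ‖z‖ 1 with hz | hz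
  · exact Or.inl (hf z hz)
  · have hz₀ : z ≠ 0 := norm_pos_iff.mp (zero_lt_one.trans hz)
    have hinv : ‖z⁻¹‖ ≤ 1 := norm_inv z ▸ inv_le_one_of_one_le₀ hz.le
    let _ : Invertible z⁻¹ := ⟨z, mul_inv_cancel₀ hz₀, inv_mul_cancel₀ hz₀⟩
    have hrev : aeval z g.reverse ≠ 0 := fun h =>
      hg z⁻¹ hinv ((eval₂_reverse_eq_zero_iff (algebraMap K L) z⁻¹ g).mp h)
    exact Or.inr (by simpa only [map_mul, aeval_X] using mul_ne_zero hz₀ hrev)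

lemma ne_zero_of_isCoprime_X_mul {R : Type*} [CommRing R] [Nontrivial R] {f g : R[X]}
    (h : IsCoprime f (X * g)) : f ≠ 0 := by
  rintro rfl
  exact not_isUnit_X (isUnit_of_mul_isUnit_left (isCoprime_zero_left.mp h))

lemma eq_zero_of_mul_eq_mul_of_natDegree_lt {R : Type*} [CommRing R] [IsDomain R]
    {a d u v : R[X]} (hdu : IsCoprime d u) (hdeg : v.natDegree < u.natDegree)
    (h : a * u = d * v) : a = 0 := by
  have hdvd : u ∣ v := hdu.symm.dvd_of_dvd_mul_left ⟨a, by rw [← h, mul_comm]⟩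
  have hu : u ≠ 0 := ne_zero_of_natDegree_gt hdeg
  rw [eq_zero_of_dvd_of_natDegree_lt hdvd hdeg, mul_zero] at h
  exact (mul_eq_zero.mp h).resolve_right hu

lemma eq_zero_of_mul_zpow_mul_aeval_inv_X_eq {a d g h : K[X]} {k l : ℤ} (hlk : l < k)
    (hd : IsCoprime d (X * h.reverse)) (hh : h.coeff 0 ≠ 0)
    (H : algebraMap K[X] (RatFunc K) a * RatFunc.X ^ k * aeval (RatFunc.X : RatFunc K)⁻¹ h =
      algebraMap K[X] (RatFunc K) d * RatFunc.X ^ l * aeval (RatFunc.X : RatFunc K)⁻¹ g) :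
    a = 0 := by
  obtain ⟨m, rfl⟩ : ∃ m : ℕ, k = l + (m + 1 : ℕ) := ⟨(k - l - 1).toNat, by omega⟩
  have hX : (RatFunc.X : RatFunc K) ≠ 0 := RatFunc.X_ne_zero
  have hpoly : a * (X ^ (m + 1 + g.natDegree) * h.reverse) = d * (X ^ h.natDegree * g.reverse) := by
    apply RatFunc.algebraMap_injective K
    simp only [map_mul, map_pow, RatFunc.algebraMap_X, ← aeval_inv_X_mul_X_pow_natDegree]
    rw [zpow_add₀ hX, zpow_natCast] at H
    apply mul_left_cancel₀ (zpow_ne_zero l hX)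
    linear_combination RatFunc.X ^ (g.natDegree + h.natDegree) * H
  have hcop : IsCoprime d (X ^ (m + 1 + g.natDegree) * h.reverse) :=
    hd.of_mul_right_left.pow_right.mul_right hd.of_mul_right_right
  have hrev : h.reverse ≠ 0 := by
    rw [Ne, reverse_eq_zero]
    rintro rfl
    exact hh (coeff_zero 0)
  have hdeg : (X ^ h.natDegree * g.reverse).natDegree <
      (X ^ (m + 1 + g.natDegree) * h.reverse).natDegree := by
    rw [natDegree_mul (pow_ne_zero _ X_ne_zero) hrev, natDegree_X_pow,
      natDegree_reverse_of_coeff_zero_ne_zero hh]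
    calc (X ^ h.natDegree * g.reverse).natDegree
        ≤ h.natDegree + g.natDegree :=
          natDegree_mul_le_of_le (natDegree_X_pow_le _) (reverse_natDegree_le g)
      _ < m + 1 + g.natDegree + h.natDegree := by omega
  exact eq_zero_of_mul_eq_mul_of_natDegree_lt hcop hdeg hpoly

end Reverse

/-- The right-hand side `p(z) diag(z^κ) F(1/z)` of a Wiener–Hopf factorisation, over an arbitrary
field of coefficients and without conditions on the factors. -/
noncomputable def wienerHopfProd {K ι : Type*} [Field K] [Fintype ι] [DecidableEq ι]
    (p : Matrix ι ι K[X]) (κ : ι → ℤ) (F : Matrix ι ι K[X]) : Matrix ι ι (RatFunc K) :=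
  p.map (algebraMap K[X] (RatFunc K)) * diagonal (fun i => RatFunc.X ^ κ i) *
    F.map (aeval (RatFunc.X : RatFunc K)⁻¹)

section PartialIndices

variable {K ι : Type*} [Field K] [Fintype ι] [LinearOrder ι]
  {p p' F F' : Matrix ι ι K[X]} {κ κ' : ι → ℤ}

lemma card_lt_card_filter_ge_add_card_filter_le (i : ι) :
    Fintype.card ι < (Finset.univ.filter (i ≤ ·)).card + (Finset.univ.filter (· ≤ i)).card := by
  have hunion : Finset.univ.filter (i ≤ ·) ∪ Finset.univ.filter (· ≤ i) = Finset.univ := by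
    ext j
    simp [le_total]
  have hinter : 0 < (Finset.univ.filter (i ≤ ·) ∩ Finset.univ.filter (· ≤ i)).card :=
    Finset.card_pos.mpr ⟨i, by simp⟩
  rw [← Finset.card_union_add_card_inter, hunion, Finset.card_univ]
  omega

lemma partialIndices_le (hκ : Antitone κ) (hκ' : Antitone κ') (hp : p.det ≠ 0)
    (hF : F.det.coeff 0 ≠ 0) (hp'F : IsCoprime p'.det (X * F.det.reverse))
    (h : wienerHopfProd p κ F = wienerHopfProd p' κ' F') :
    κ ≤ κ' := by
  intro i
  by_contra! hi
  have hdet : (adjugate p' * p).det ≠ 0 := by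
    rw [det_mul, det_adjugate]
    exact mul_ne_zero (pow_ne_zero _ (ne_zero_of_isCoprime_X_mul hp'F)) hp
  refine hdet (det_eq_zero_of_card_lt_card_add_card _ _ _
    (card_lt_card_filter_ge_add_card_filter_le i) fun r hr c hc => ?_)
  have hir : i ≤ r := (Finset.mem_filter.mp hr).2
  have hci : c ≤ i := (Finset.mem_filter.mp hc).2
  have hlt : κ' r < κ c := (hκ' hir).trans_lt (hi.trans_le (hκ hci))
  exact eq_zero_of_mul_zpow_mul_aeval_inv_X_eq hlt hp'F hF
    (adjugate_mul_apply_of_mul_diagonal_mul_eq (algebraMap K[X] (RatFunc K))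
      (aeval (RatFunc.X : RatFunc K)⁻¹ : K[X] →ₐ[K] RatFunc K).toRingHom h r c)

/- Coprimality says that `det p(z)` and `det F'(1/z)` have no common zero `z ≠ 0` in an algebraic
closure and that `det p(0) ≠ 0`; the condition on `coeff 0` is `det F(1/z) ≠ 0` at `z = ∞`. -/
theorem stmt13_general (hκ : Antitone κ) (hκ' : Antitone κ')
    (hF : F.det.coeff 0 ≠ 0) (hF' : F'.det.coeff 0 ≠ 0)
    (hpF' : IsCoprime p.det (X * F'.det.reverse)) (hp'F : IsCoprime p'.det (X * F.det.reverse))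
    (h : wienerHopfProd p κ F = wienerHopfProd p' κ' F') :
    κ = κ' :=
  le_antisymm (partialIndices_le hκ hκ' (ne_zero_of_isCoprime_X_mul hpF') hF hp'F h)
    (partialIndices_le hκ' hκ (ne_zero_of_isCoprime_X_mul hp'F) hF' hpF' h.symm)

end PartialIndices

lemma det_evalMat {n : ℕ} (M : Matrix (Fin n) (Fin n) ℝ[X]) (z : ℂ) :
    (evalMat M z).det = aeval z M.det :=
  (AlgHom.map_det (aeval z) M).symm

namespace IsWHF

variable {n : ℕ} {b p p' F F' : Matrix (Fin n) (Fin n) ℝ[X]} {κ κ' : Fin n → ℤ}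

lemma coeff_zero_det_ne_zero (h : IsWHF b p F κ) : F.det.coeff 0 ≠ 0 := fun h₀ =>
  h.F_noZero 0 (by simp) (by rw [det_evalMat, ← coeff_zero_eq_aeval_zero', h₀, map_zero])

lemma isCoprime_det_X_mul_reverse_det (h : IsWHF b p F κ) (h' : IsWHF b p' F' κ') :
    IsCoprime p.det (X * F'.det.reverse) :=
  isCoprime_X_mul_reverse (fun z hz => det_evalMat p z ▸ h.p_noZero z hz)
    (fun w hw => det_evalMat F' w ▸ h'.F_noZero w hw)

end IsWHF

/-- the partial indices of a Wiener–Hopf factorisation are uniquely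
determined by b. -/
theorem stmt13 {n : ℕ} (b p p' F F' : Matrix (Fin n) (Fin n) (Polynomial ℝ))
    (κ κ' : Fin n → ℤ)
    (hcirc : ∀ z : ℂ, ‖z‖ = 1 → (evalMat b z).det ≠ 0)
    (h1 : IsWHF b p F κ) (h2 : IsWHF b p' F' κ') :
    κ = κ' :=
  stmt13_general h1.anti h2.anti h1.coeff_zero_det_ne_zero h2.coeff_zero_det_ne_zero
    (h1.isCoprime_det_X_mul_reverse_det h2) (h2.isCoprime_det_X_mul_reverse_det h1)
    (h1.eq.symm.trans h2.eq)
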